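/- arXiv:2501.00716 — 3 statements merged into one kernel-verified Lean document; each statement's English description precedes it below -/
import Mathlib

section
/- Let d_n denote the least common multiple of the integers 1, 2, …, n. Then for every integer n ≥ 1, the rational number d_n³ · B_n is an integer. -/
/-- The second Apéry sequence (with `B_0 = 0`). -/
noncomputable def aperyB (n : ℕ) : ℚ :=
  ∑ ℓ ∈ Finset.range (n + 1),
    ((n.choose ℓ : ℚ)) ^ 2 * (((n + ℓ).choose ℓ : ℚ)) ^ 2 *
      ((∑ m ∈ Finset.Icc 1 n, (1 : ℚ) / (m : ℚ) ^ 3) -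
        ∑ m ∈ Finset.Icc 1 ℓ,
          (-1 : ℚ) ^ m / (2 * (m : ℚ) ^ 3 * (n.choose m : ℚ) * ((n + m).choose m : ℚ)))

/-!
Write `d n` for `Nat.lcmUpto n`. By Kummer's theorem `m * n.choose m ∣ d n` for `1 ≤ m ≤ n`: the
carries counted by the `p`-adic valuation of `n.choose m` occur only at or above the lowest nonzero
base-`p` digit of `m`, so there are at most `Nat.log p n` minus the valuation of `m` of them.
A summand of the correction term of `aperyB n` has the denominator
`2 * m ^ 3 * n.choose m * (n + m).choose m`. Since
`(n + l).choose l * l.choose m = (n + l).choose (n + m) * (n + m).choose m`, the factor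
`(n + m).choose m` may be traded for `l.choose m`, and three factors of `d n` then absorb `m`,
`m * n.choose m` and `m * l.choose m`. The remaining `2` divides the central binomial coefficient
in `n.choose l * (n + l).choose l = (n + l).choose (2 * l) * l.centralBinom`.
-/

theorem factorization_mul_choose_le_log (p n k : ℕ) :
    (k * n.choose k).factorization p ≤ Nat.log p n := by
  by_cases! hp : ¬p.Prime
  · simp only [Nat.factorization_eq_zero_of_not_prime _ hp, zero_le]
  rcases Nat.eq_zero_or_pos k with rfl | hk
  · simp
  rcases lt_or_ge n k with hnk | hkn
  · simp [Nat.choose_eq_zero_of_lt hnk]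
  let positions := Finset.Ico 1 (Nat.log p n + 1)
  have no_carry_of_dvd : Disjoint {i ∈ positions | p ^ i ∣ k}
      {i ∈ positions | p ^ i ≤ k % p ^ i + (n - k) % p ^ i} := by
    refine Finset.disjoint_filter.2 fun i _ hdvd hcarry => ?_
    rw [Nat.mod_eq_zero_of_dvd hdvd, zero_add] at hcarry
    exact (Nat.mod_lt _ (pow_pos hp.pos i)).not_ge hcarry
  have hk_lt : k < p ^ (Nat.log p n + 1) := hkn.trans_lt (Nat.lt_pow_succ_log_self hp.one_lt n)
  rw [Nat.factorization_mul hk.ne' (Nat.choose_ne_zero hkn), Finsupp.add_apply,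
    Nat.factorization_eq_card_pow_dvd_of_lt hp hk hk_lt,
    Nat.factorization_choose hp hkn (Nat.lt_succ_self _),
    ← Finset.card_union_of_disjoint no_carry_of_dvd, ← Finset.filter_or]
  exact (Finset.card_filter_le _ _).trans_eq (Nat.card_Ico _ _)

theorem mul_choose_dvd_lcmUpto {n k : ℕ} (hk : k ≠ 0) (hkn : k ≤ n) :
    k * n.choose k ∣ Nat.lcmUpto n := by
  rw [← Nat.factorization_prime_le_iff_dvd (mul_ne_zero hk (Nat.choose_ne_zero hkn))
    (Nat.lcmUpto_ne_zero n)]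
  intro p hp
  rw [Nat.factorization_lcmUpto n hp]
  exact factorization_mul_choose_le_log p n k

theorem lcmUpto_dvd_lcmUpto {m n : ℕ} (hmn : m ≤ n) : Nat.lcmUpto m ∣ Nat.lcmUpto n :=
  Finset.lcm_mono (Finset.Icc_subset_Icc_right hmn)

theorem dvd_lcmUpto {n k : ℕ} (hk : k ≠ 0) (hkn : k ≤ n) : k ∣ Nat.lcmUpto n :=
  Finset.dvd_lcm (f := id) (Finset.mem_Icc.2 ⟨Nat.one_le_iff_ne_zero.2 hk, hkn⟩)

theorem choose_mul_add_choose_eq_mul_centralBinom (n l : ℕ) :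
    n.choose l * (n + l).choose l = (n + l).choose (2 * l) * l.centralBinom := by
  have h := Nat.choose_mul (n := n + l) (k := 2 * l) (s := l) (by omega)
  rw [Nat.add_sub_cancel, show 2 * l - l = l by omega] at h
  rw [Nat.centralBinom_eq_two_mul_choose, h, mul_comm]

theorem two_dvd_choose_mul_add_choose (n : ℕ) {l : ℕ} (hl : l ≠ 0) :
    2 ∣ n.choose l * (n + l).choose l := by
  rw [choose_mul_add_choose_eq_mul_centralBinom]
  exact (Nat.two_dvd_centralBinom_of_one_le (Nat.pos_of_ne_zero hl)).mul_left _

theorem add_choose_mul_choose (n l m : ℕ) :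
    (n + l).choose l * l.choose m = (n + l).choose (n + m) * (n + m).choose m := by
  have h := Nat.choose_mul (n := n + l) (k := n + m) (s := n) (Nat.le_add_right n m)
  rw [Nat.add_sub_cancel_left, Nat.add_sub_cancel_left, Nat.choose_symm_add,
    Nat.choose_symm_add] at h
  exact h.symm

theorem two_mul_pow_three_mul_choose_mul_choose_dvd {n l m : ℕ} (hm : m ≠ 0) (hml : m ≤ l)
    (hln : l ≤ n) :
    2 * m ^ 3 * n.choose m * (n + m).choose m ∣
      Nat.lcmUpto n ^ 3 * (n.choose l ^ 2 * (n + l).choose l ^ 2) := by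
  have hmn : m ≤ n := hml.trans hln
  have hm_dvd : m ∣ Nat.lcmUpto n := dvd_lcmUpto hm hmn
  have hn_dvd : m * n.choose m ∣ Nat.lcmUpto n := mul_choose_dvd_lcmUpto hm hmn
  have hl_dvd : m * l.choose m ∣ Nat.lcmUpto n :=
    (mul_choose_dvd_lcmUpto hm hml).trans (lcmUpto_dvd_lcmUpto hln)
  have htwo_dvd : 2 ∣ n.choose l * (n + l).choose l :=
    two_dvd_choose_mul_add_choose n (by omega)
  have hchoose_dvd : (n + m).choose m ∣ n.choose l * ((n + l).choose l * l.choose m) := by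
    rw [add_choose_mul_choose]
    exact (dvd_mul_left _ _).mul_left _
  refine Nat.dvd_of_mul_dvd_mul_right (Nat.choose_pos hml) ?_
  calc 2 * m ^ 3 * n.choose m * (n + m).choose m * l.choose m
      = m * (m * n.choose m) * (m * l.choose m) * 2 * (n + m).choose m := by ring
    _ ∣ Nat.lcmUpto n * Nat.lcmUpto n * Nat.lcmUpto n * (n.choose l * (n + l).choose l) *
          (n.choose l * ((n + l).choose l * l.choose m)) := by gcongr
    _ = Nat.lcmUpto n ^ 3 * (n.choose l ^ 2 * (n + l).choose l ^ 2) * l.choose m := by ring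

theorem natCast_div_mem_bot {K : Type*} [DivisionRing K] [CharZero K] {a b : ℕ} (h : a ∣ b) :
    (b : K) / a ∈ (⊥ : Subring K) := by
  rw [← Nat.cast_div_charZero h]
  exact natCast_mem _ _

theorem lcmUpto_pow_mul_sum_one_div_pow_mem_bot (K : Type*) [DivisionRing K] [CharZero K]
    (n s : ℕ) :
    (Nat.lcmUpto n : K) ^ s * ∑ m ∈ Finset.Icc 1 n, 1 / (m : K) ^ s ∈ (⊥ : Subring K) := by
  rw [Finset.mul_sum]
  refine sum_mem fun m hm => ?_
  obtain ⟨hm_pos, hmn⟩ := Finset.mem_Icc.1 hm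
  have h := natCast_div_mem_bot (K := K)
    (pow_dvd_pow_of_dvd (dvd_lcmUpto (Nat.one_le_iff_ne_zero.1 hm_pos) hmn) s)
  rwa [Nat.cast_pow, Nat.cast_pow, ← mul_one_div] at h

theorem lcmUpto_pow_three_mul_correction_mem_bot {K : Type*} [Field K] [CharZero K] {n l : ℕ}
    (hln : l ≤ n) :
    (Nat.lcmUpto n : K) ^ 3 * ((n.choose l : K) ^ 2 * ((n + l).choose l : K) ^ 2 *
      ∑ m ∈ Finset.Icc 1 l,
        (-1 : K) ^ m / (2 * (m : K) ^ 3 * (n.choose m : K) * ((n + m).choose m : K))) ∈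
      (⊥ : Subring K) := by
  rw [← mul_assoc, Finset.mul_sum]
  refine sum_mem fun m hm => ?_
  obtain ⟨hm_pos, hml⟩ := Finset.mem_Icc.1 hm
  have h := natCast_div_mem_bot (K := K)
    (two_mul_pow_three_mul_choose_mul_choose_dvd (Nat.one_le_iff_ne_zero.1 hm_pos) hml hln)
  push_cast at h
  rw [mul_div_left_comm]
  exact mul_mem (pow_mem (neg_mem (one_mem _)) m) h

/-- The denominator bound in Apéry's proof: with `d_n = lcm[1, 2, …, n]`, the rational
number `d_n³ · B_n` is an integer, for every `n ≥ 1`. -/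
theorem aperyB_denominator (n : ℕ) (hn : 1 ≤ n) :
    ∃ z : ℤ, ((((Finset.Icc 1 n).lcm id : ℕ) : ℚ) ^ 3) * aperyB n = (z : ℚ) := by
  change ∃ z : ℤ, (Nat.lcmUpto n : ℚ) ^ 3 * aperyB n = z
  suffices h : (Nat.lcmUpto n : ℚ) ^ 3 * aperyB n ∈ (⊥ : Subring ℚ) by
    simpa only [Subring.mem_bot, eq_comm] using h
  rw [aperyB, Finset.mul_sum]
  refine sum_mem fun l hl => ?_
  rw [mul_sub, mul_sub, mul_left_comm]
  have hchoose : (n.choose l : ℚ) ^ 2 * ((n + l).choose l : ℚ) ^ 2 ∈ (⊥ : Subring ℚ) :=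
    mul_mem (pow_mem (natCast_mem _ _) 2) (pow_mem (natCast_mem _ _) 2)
  exact sub_mem (mul_mem hchoose (lcmUpto_pow_mul_sum_one_div_pow_mem_bot ℚ n 3))
    (lcmUpto_pow_three_mul_correction_mem_bot (Finset.mem_range_succ_iff.1 hl))
end

section
/- The real number ζ(3) = ∑_{m=1}^∞ 1/m³ is irrational. -/
/-!
Apéry's numbers `A_n` and `B_n` satisfy the same three-term recurrence, so their Casoratian
`B_{n+1} A_n - A_{n+1} B_n` can be computed and equals `6 / (n + 1)³`. As `B_n / A_n → ζ(3)`, this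
makes `B_n / A_n` strictly increasing and gives `0 < A_n ζ(3) - B_n ≤ 6 ζ(3) / A_n`. With
`d_n = lcm (1, …, n)`, the number `2 d_n³ B_n` is an integer, so `2 d_n³ (A_n ζ(3) - B_n)` is a
positive integral linear form in `1` and `ζ(3)`. It tends to zero, and hence `ζ(3)` is irrational,
because `A_n` eventually grows faster than `33 ^ n` by the recurrence, while `d_n³` is only
`O(32.768 ^ n)` by a Chebyshev-type estimate.
-/

open Asymptotics Filter Finset Topology

theorem irrational_of_tendsto_zero {ι : Type*} {l : Filter ι} [l.NeBot] {x : ℝ} {a b : ι → ℤ}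
    (hne : ∀ i, (a i : ℝ) * x ≠ b i) (hlim : Tendsto (fun i ↦ (a i : ℝ) * x - b i) l (𝓝 0)) :
    Irrational x := by
  rintro ⟨r, rfl⟩
  have hden : (r.den : ℝ) ≠ 0 := mod_cast r.den_ne_zero
  have hclear (i : ι) :
      (r.den : ℝ) * ((a i : ℝ) * r - b i) = ((a i * r.num - r.den * b i : ℤ) : ℝ) := by
    have hr : (r.den : ℝ) * r = r.num := mod_cast Rat.den_mul_eq_num r
    push_cast
    linear_combination (a i : ℝ) * hr
  have hsmall : ∀ᶠ i in l, |(r.den : ℝ) * ((a i : ℝ) * r - b i)| < 1 :=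
    (by simpa using (hlim.const_mul (r.den : ℝ)).abs :
      Tendsto (fun i ↦ |(r.den : ℝ) * ((a i : ℝ) * r - b i)|) l (𝓝 0)).eventually_lt_const one_pos
  obtain ⟨i, hi⟩ := hsmall.exists
  rw [hclear, ← Int.cast_abs] at hi
  have hzero : a i * r.num - r.den * b i = 0 := Int.abs_lt_one_iff.1 (mod_cast hi)
  have := hclear i
  rw [hzero, Int.cast_zero, mul_eq_zero, sub_eq_zero] at this
  exact hne i (this.resolve_left hden)

theorem eventually_pow_div_add_one_le {a c : ℝ} {N : ℕ} (hN : 0 < N) (ha : 1 ≤ a) (hc : 0 ≤ c)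
    (hca : c < a ^ N) : ∀ᶠ n in atTop, c ^ (n / N + 1) ≤ a ^ n := by
  have hratio : c / a ^ N < 1 := (div_lt_one (by positivity)).2 hca
  obtain ⟨K, hK⟩ := exists_pow_lt_of_lt_one (show 0 < 1 / a ^ N by positivity) hratio
  filter_upwards [eventually_ge_atTop (K * N)] with n hn
  have hKn : K ≤ n / N + 1 := ((Nat.le_div_iff_mul_le hN).2 hn).trans (Nat.le_succ _)
  calc c ^ (n / N + 1) = (c / a ^ N) ^ (n / N + 1) * (a ^ N) ^ (n / N + 1) := by
        rw [← mul_pow, div_mul_cancel₀ _ (by positivity)]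
    _ ≤ 1 / a ^ N * (a ^ N) ^ (n / N + 1) := by
        gcongr
        exact (pow_le_pow_of_le_one (by positivity) hratio.le hKn).trans hK.le
    _ = a ^ (N * (n / N)) := by rw [pow_succ, pow_mul]; field_simp
    _ ≤ a ^ n := pow_le_pow_right₀ ha (Nat.mul_div_le n N)

theorem isBigO_pow_of_le_mul_pow {u : ℕ → ℝ} {a b : ℝ} {N : ℕ} (hu : Monotone u)
    (hu0 : ∀ n, 0 ≤ u n) (hN : 2 ≤ N) (ha : 1 ≤ a) (hb : 0 ≤ b) (hba : b < a ^ (N - 1))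
    (hstep : ∀ k, u (N * k) ≤ u k * b ^ k) : u =O[atTop] fun n ↦ a ^ n := by
  have habN : a * b < a ^ N := by rw [← mul_pow_sub_one (by lia : N ≠ 0) a]; gcongr
  obtain ⟨M, hM⟩ := eventually_atTop.1 ((eventually_ge_atTop 3).and
    (eventually_pow_div_add_one_le (by lia : 0 < N) ha (by positivity) habN))
  have hbound (n : ℕ) : u n ≤ u M * a ^ n := by
    induction n using Nat.strong_induction_on with
    | _ n ih =>
      obtain hn | hn := le_total n M
      · exact (hu hn).trans (le_mul_of_one_le_right (hu0 _) (one_le_pow₀ ha))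
      obtain ⟨hn3, hpow⟩ := hM n hn
      have hlt : n / N + 1 < n := by
        have := Nat.div_le_div_left (c := 2) hN (by lia) (a := n)
        lia
      calc u n ≤ u (N * (n / N + 1)) := hu (Nat.lt_mul_div_succ n (by lia)).le
        _ ≤ u (n / N + 1) * b ^ (n / N + 1) := hstep _
        _ ≤ u M * a ^ (n / N + 1) * b ^ (n / N + 1) := by gcongr; exact ih _ hlt
        _ = u M * (a * b) ^ (n / N + 1) := by rw [mul_pow, mul_assoc]
        _ ≤ u M * a ^ n := by gcongr; exact hu0 M
  refine IsBigO.of_bound (u M) (.of_forall fun n ↦ ?_)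
  rw [Real.norm_of_nonneg (hu0 n), Real.norm_of_nonneg (by positivity)]
  exact hbound n

theorem isBigO_pow_of_eventually_mul_le {u : ℕ → ℝ} {r : ℝ} (hr : 0 ≤ r) (hu : ∀ n, 0 < u n)
    (h : ∀ᶠ n in atTop, r * u n ≤ u (n + 1)) : (fun n ↦ r ^ n) =O[atTop] u := by
  obtain ⟨N, hN⟩ := eventually_atTop.1 h
  refine IsBigO.of_bound (r ^ N / u N) ((eventually_ge_atTop N).mono fun n hn ↦ ?_)
  obtain ⟨k, rfl⟩ := Nat.exists_eq_add_of_le hn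
  have hgeom : r ^ k * u N ≤ u (N + k) := geom_le (u := fun k ↦ u (N + k)) hr k fun j _ ↦
    hN (N + j) (by lia)
  rw [Real.norm_of_nonneg (by positivity), Real.norm_of_nonneg (hu _).le, pow_add,
    div_mul_eq_mul_div, le_div_iff₀ (hu N), mul_assoc]
  gcongr

/-! ### The growth of the least common multiple -/

theorem dvd_lcmUpto_s17 {m n : ℕ} (hm : m ≠ 0) (hmn : m ≤ n) : m ∣ n.lcmUpto :=
  dvd_lcm (f := id) (mem_Icc.2 ⟨Nat.pos_of_ne_zero hm, hmn⟩)

theorem lcmUpto_dvd_lcmUpto_s17 {m n : ℕ} (h : m ≤ n) : m.lcmUpto ∣ n.lcmUpto :=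
  lcm_mono (Icc_subset_Icc_right h)

theorem mul_choose_dvd_lcmUpto_s17 {m n : ℕ} (hm : m ≠ 0) (hmn : m ≤ n) :
    m * n.choose m ∣ n.lcmUpto := by
  have hchoose := Nat.choose_ne_zero hmn
  rw [← Nat.factorization_prime_le_iff_dvd (mul_ne_zero hm hchoose) n.lcmUpto_ne_zero]
  intro p hp
  have hmlt : m < p ^ (Nat.log p n + 1) := hmn.trans_lt (Nat.lt_pow_succ_log_self hp.one_lt n)
  -- If `p ^ i ∣ m`, the base-`p` addition of `m` and `n - m` has no carry at position `i`.
  have hdisj : Disjoint {i ∈ Ico 1 (Nat.log p n + 1) | p ^ i ∣ m}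
      {i ∈ Ico 1 (Nat.log p n + 1) | p ^ i ≤ m % p ^ i + (n - m) % p ^ i} := by
    simp +contextual [disjoint_left, Nat.dvd_iff_mod_eq_zero, Nat.mod_lt _ (pow_pos hp.pos _)]
  rw [Nat.factorization_lcmUpto n hp, Nat.factorization_mul hm hchoose, Finsupp.add_apply,
    Nat.factorization_eq_card_pow_dvd_of_lt hp (Nat.pos_of_ne_zero hm) hmlt,
    Nat.factorization_choose hp hmn (Nat.lt_succ_self _), ← card_union_of_disjoint hdisj,
    filter_union_right]
  exact (card_filter_le _ _).trans (by simp)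

theorem log_eq_sum_pow_le {p n b : ℕ} (hp : 1 < p) (hn : n ≠ 0) (hb : Nat.log p n < b) :
    Nat.log p n = ∑ i ∈ Ico 1 b, if p ^ i ≤ n then 1 else 0 := by
  have : {i ∈ Ico 1 b | p ^ i ≤ n} = Icc 1 (Nat.log p n) := by
    ext i
    simp only [mem_filter, mem_Ico, mem_Icc, ← Nat.le_log_iff_pow_le hp hn]
    lia
  rw [← card_filter, this, Nat.card_Icc, Nat.add_sub_cancel]

theorem factorization_multinomial_add {ι : Type*} (s : Finset ι) (f : ι → ℕ) {p b : ℕ}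
    (hp : p.Prime) (hb : Nat.log p (∑ j ∈ s, f j) < b) :
    (∑ i ∈ Ico 1 b, ∑ j ∈ s, f j / p ^ i) + (Nat.multinomial s f).factorization p =
      ∑ i ∈ Ico 1 b, (∑ j ∈ s, f j) / p ^ i := by
  have hlog {j : ι} (hj : j ∈ s) : Nat.log p (f j) < b :=
    (Nat.log_mono_right (single_le_sum_of_canonicallyOrdered hj)).trans_lt hb
  rw [← Nat.factorization_factorial hp hb, ← Nat.multinomial_spec,
    Nat.factorization_mul (prod_ne_zero_iff.2 fun j _ ↦ (f j).factorial_ne_zero)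
      (Nat.multinomial_pos s f).ne', Nat.factorization_prod fun j _ ↦ (f j).factorial_ne_zero,
    Finsupp.add_apply, Finsupp.finsetSum_apply, sum_comm]
  congr 1
  exact sum_congr rfl fun j hj ↦ (Nat.factorization_factorial hp (hlog hj)).symm

theorem multinomial_mul_prod_pow_le {ι : Type*} [Fintype ι] (f x : ι → ℕ) :
    Nat.multinomial univ f * ∏ i, x i ^ f i ≤ (∑ i, x i) ^ ∑ i, f i := by
  classical
  rw [sum_pow_eq_sum_piAntidiag]
  exact single_le_sum_of_canonicallyOrdered (M := ℕ)
    (f := fun g ↦ Nat.multinomial univ g * ∏ i, x i ^ g i) (by simp [mem_piAntidiag])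

/- Chebyshev's method: as `1 = 1/2 + 1/3 + 1/8 + 1/24`, every prime power `p ^ i` with
`k < p ^ i ≤ 24 * k` contributes a factor `p` to `(24k)! / ((12k)! (8k)! (3k)! k!)`. The simpler
`(2k)! / (k!)²` would only give `lcm (1, …, n) = O(4 ^ n)`, which is too weak because `4³ > 33`. -/
theorem sum_div_add_ite_le_ite_add_div (k : ℕ) {q : ℕ} (hq : 0 < q) :
    12 * k / q + 8 * k / q + 3 * k / q + k / q + (if q ≤ 24 * k then 1 else 0) ≤
      (if q ≤ k then 1 else 0) + 24 * k / q := by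
  have h (d : ℕ) (hd : 0 < d) (m : ℕ) : m * k / q = d * m * k / q / d := by
    rw [Nat.div_div_eq_div_mul, mul_comm q, mul_assoc, Nat.mul_div_mul_left _ _ hd]
  have h24 : k / q = 24 * k / q / 24 := by simpa using h 24 (by simp) 1
  rw [h 2 two_pos 12, h 3 three_pos 8, h 8 (by simp) 3, h24]
  simp only [← Nat.one_le_div_iff hq, h24, Nat.reduceMul]
  split_ifs <;> lia

theorem lcmUpto_twentyFour_mul_dvd (k : ℕ) :
    (24 * k).lcmUpto ∣ k.lcmUpto * Nat.multinomial univ ![12 * k, 8 * k, 3 * k, k] := by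
  obtain rfl | hk := eq_or_ne k 0
  · simp
  have hsum : ∑ j, ![12 * k, 8 * k, 3 * k, k] j = 24 * k := by simp [Fin.sum_univ_four]; ring
  rw [← Nat.factorization_prime_le_iff_dvd (Nat.lcmUpto_ne_zero _)
    (mul_ne_zero k.lcmUpto_ne_zero (Nat.multinomial_pos _ _).ne')]
  intro p hp
  have hb : Nat.log p (24 * k) < Nat.log p (24 * k) + 1 := Nat.lt_succ_self _
  have hbk : Nat.log p k < Nat.log p (24 * k) + 1 := (Nat.log_mono_right (by lia)).trans_lt hb
  have hmult := factorization_multinomial_add univ ![12 * k, 8 * k, 3 * k, k] hp (hsum ▸ hb)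
  rw [hsum] at hmult
  rw [Nat.factorization_mul k.lcmUpto_ne_zero (Nat.multinomial_pos _ _).ne', Finsupp.add_apply,
    Nat.factorization_lcmUpto _ hp, Nat.factorization_lcmUpto _ hp,
    log_eq_sum_pow_le hp.one_lt (by lia) hb, log_eq_sum_pow_le hp.one_lt hk hbk]
  refine Nat.le_of_add_le_add_left (a := ∑ i ∈ Ico 1 (Nat.log p (24 * k) + 1),
    ∑ j, ![12 * k, 8 * k, 3 * k, k] j / p ^ i) ?_
  rw [add_left_comm, hmult, ← sum_add_distrib, ← sum_add_distrib]
  refine sum_le_sum fun i _ ↦ ?_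
  simpa [Fin.sum_univ_four] using sum_div_add_ite_le_ite_add_div k (pow_pos hp.pos i)

theorem multinomial_twentyFour_mul_le (k : ℕ) :
    Nat.multinomial univ ![12 * k, 8 * k, 3 * k, k] ≤ (2 ^ 24 * 3 ^ 9) ^ k := by
  have h := multinomial_mul_prod_pow_le ![12 * k, 8 * k, 3 * k, k] ![12, 8, 3, 1]
  simp only [Fin.prod_univ_four, Fin.sum_univ_four, Matrix.cons_val] at h
  refine Nat.le_of_mul_le_mul_right (c := (12 ^ 12 * 8 ^ 8 * 3 ^ 3) ^ k) ?_ (by positivity)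
  calc Nat.multinomial univ ![12 * k, 8 * k, 3 * k, k] * (12 ^ 12 * 8 ^ 8 * 3 ^ 3) ^ k
      = Nat.multinomial univ ![12 * k, 8 * k, 3 * k, k] *
          (12 ^ (12 * k) * 8 ^ (8 * k) * 3 ^ (3 * k) * 1 ^ k) := by
        simp only [mul_pow, pow_mul, one_pow, mul_one]
    _ ≤ (12 + 8 + 3 + 1) ^ (12 * k + 8 * k + 3 * k + k) := h
    _ = ((12 + 8 + 3 + 1) ^ 24) ^ k := by rw [← pow_mul]; congr 1; ring
    _ = (2 ^ 24 * 3 ^ 9) ^ k * (12 ^ 12 * 8 ^ 8 * 3 ^ 3) ^ k := by rw [← mul_pow]; norm_num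

theorem lcmUpto_twentyFour_mul_le (k : ℕ) : (24 * k).lcmUpto ≤ k.lcmUpto * (2 ^ 24 * 3 ^ 9) ^ k :=
  (Nat.le_of_dvd (Nat.mul_pos (Nat.pos_of_ne_zero k.lcmUpto_ne_zero) (Nat.multinomial_pos _ _))
    (lcmUpto_twentyFour_mul_dvd k)).trans (Nat.mul_le_mul_left _ (multinomial_twentyFour_mul_le k))

theorem isBigO_lcmUpto_pow : (fun n ↦ (n.lcmUpto : ℝ)) =O[atTop] fun n ↦ (16 / 5 : ℝ) ^ n := by
  refine isBigO_pow_of_le_mul_pow (N := 24) (b := 2 ^ 24 * 3 ^ 9) (fun m n h ↦ ?_)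
    (fun n ↦ by positivity) (by norm_num) (by norm_num) (by norm_num) (by norm_num) fun k ↦ ?_
  · exact mod_cast Nat.le_of_dvd (Nat.pos_of_ne_zero n.lcmUpto_ne_zero) (lcmUpto_dvd_lcmUpto_s17 h)
  · exact mod_cast lcmUpto_twentyFour_mul_le k

namespace Apery

/-! ### Apéry's sequences and their recurrence -/

/-- The coefficients `C(n, k) C(n + k, k)`, whose squares sum to the Apéry number `A_n`. -/
def coeff (n k : ℕ) : ℕ := n.choose k * (n + k).choose k

/-- The partial sums `∑_{m = 1}^n 1 / m³` of `ζ(3)`. -/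
def partialSum (n : ℕ) : ℚ := ∑ m ∈ range n, 1 / ((m : ℚ) + 1) ^ 3

/-- Apéry's double sequence `c_{n,k}` of approximations to `ζ(3)`. For `n < k` it involves
divisions by `coeff n (m + 1) = 0`, so it is only meaningful when multiplied by `coeff n k`. -/
def approx (n k : ℕ) : ℚ :=
  partialSum n + ∑ m ∈ range k, (-1) ^ m / (2 * ((m : ℚ) + 1) ^ 3 * coeff n (m + 1))

/-- The Apéry numbers `A_n`, the denominators of the rational approximations to `ζ(3)`. -/
def denom (n : ℕ) : ℕ := ∑ k ∈ range (n + 1), coeff n k ^ 2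

/-- The companion sequence `B_n`, the numerators of the rational approximations to `ζ(3)`. -/
def numer (n : ℕ) : ℚ := ∑ k ∈ range (n + 1), (coeff n k : ℚ) ^ 2 * approx n k

theorem coeff_zero_right (n : ℕ) : coeff n 0 = 1 := by simp [coeff]

theorem coeff_eq_zero {n k : ℕ} (h : n < k) : coeff n k = 0 := by
  simp [coeff, Nat.choose_eq_zero_of_lt h]

theorem coeff_pos {n k : ℕ} (h : k ≤ n) : 0 < coeff n k :=
  Nat.mul_pos (Nat.choose_pos h) (Nat.choose_pos (Nat.le_add_left k n))

theorem coeff_succ_left_mul (n k : ℕ) :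
    (coeff (n + 1) k : ℚ) * (n + 1 - k) = (n + 1 + k) * coeff n k := by
  obtain hk | hk := le_or_gt k (n + 1)
  · have h₁ : (n.choose k : ℚ) * (n + 1) = (n + 1).choose k * (n + 1 - k) := by
      rw [← Nat.cast_succ, ← Nat.cast_sub hk]
      exact mod_cast Nat.choose_mul_succ_eq n k
    have h₂ : ((n + k).choose k : ℚ) * (n + 1 + k) = (n + 1 + k).choose k * (n + 1) := by
      have := Nat.choose_mul_succ_eq (n + k) k
      rw [add_right_comm, Nat.add_sub_cancel] at this
      exact mod_cast this
    simp only [coeff, Nat.cast_mul]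
    refine mul_right_cancel₀ (b := (n + 1 : ℚ)) (by positivity) ?_
    linear_combination -((n + 1).choose k * (n + 1 - k) : ℚ) * h₂ -
      ((n + k).choose k * (n + 1 + k) : ℚ) * h₁
  · simp [coeff_eq_zero hk, coeff_eq_zero (Nat.lt_of_succ_lt hk)]

theorem coeff_succ_right_mul (n k : ℕ) :
    (coeff n (k + 1) : ℚ) * (k + 1) ^ 2 = (n - k) * (n + k + 1) * coeff n k := by
  obtain hk | hk := le_or_gt k n
  · have h₁ : (n.choose (k + 1) : ℚ) * (k + 1) = n.choose k * (n - k) := by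
      rw [← Nat.cast_sub hk]
      exact mod_cast Nat.choose_succ_right_eq n k
    have h₂ : (n + k + 1 : ℚ) * (n + k).choose k = (n + (k + 1)).choose (k + 1) * (k + 1) :=
      mod_cast Nat.add_one_mul_choose_eq (n + k) k
    simp only [coeff, Nat.cast_mul]
    linear_combination ((n + (k + 1)).choose (k + 1) * (k + 1) : ℚ) * h₁ -
      (n.choose k * (n - k) : ℚ) * h₂
  · simp [coeff_eq_zero hk, coeff_eq_zero (Nat.lt_succ_of_lt hk)]

theorem exists_coeff_eq (n k : ℕ) : ∃ s : ℚ,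
    coeff (n + 2) (k + 1) = s * (n + k + 2) * (n + k + 3) ∧
    coeff (n + 1) (k + 1) = s * (n + k + 2) * (n + 1 - k) ∧
    coeff n (k + 1) = s * (n + 1 - k) * (n - k) ∧
    coeff (n + 1) k = s * (k + 1) ^ 2 := by
  have hright₂ := coeff_succ_right_mul (n + 2) k
  have hright₁ := coeff_succ_right_mul (n + 1) k
  have hright₀ := coeff_succ_right_mul n k
  have hleft₁ := coeff_succ_left_mul (n + 1) k
  have hleft₀ := coeff_succ_left_mul n k
  push_cast at hright₂ hright₁ hleft₁
  refine ⟨coeff (n + 1) k / (k + 1) ^ 2, ?_, ?_, ?_, ?_⟩ <;> field_simp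
  · linear_combination hright₂ + (n + k + 3 : ℚ) * hleft₁
  · linear_combination hright₁
  · linear_combination hright₀ - (n - k : ℚ) * hleft₀

theorem approx_zero_right (n : ℕ) : approx n 0 = partialSum n := by simp [approx]

theorem approx_succ_right (n k : ℕ) :
    approx n (k + 1) = approx n k + (-1) ^ k / (2 * ((k : ℚ) + 1) ^ 3 * coeff n (k + 1)) := by
  simp only [approx, sum_range_succ]
  ring

theorem coeff_mul_approx_succ_left_sub {n k : ℕ} (hk : k ≤ n) :
    coeff n k * (approx (n + 1) k - approx n k) =
      (-1) ^ k / (((n : ℚ) + 1) ^ 2 * (n + 1 + k)) := by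
  induction k with
  | zero =>
    simp only [coeff_zero_right, approx_zero_right, partialSum, sum_range_succ]
    field_simp
    simp
  | succ k ih =>
    have hlt : (0 : ℚ) < n - k := sub_pos.2 (mod_cast hk)
    have hpos : (0 : ℚ) < coeff n (k + 1) := mod_cast coeff_pos hk
    have hleft : (coeff (n + 1) (k + 1) : ℚ) = (n + k + 2) * coeff n (k + 1) / (n - k) := by
      rw [eq_div_iff hlt.ne']
      have := coeff_succ_left_mul n (k + 1)
      push_cast at this
      linear_combination this
    have hright : (coeff n k : ℚ) = coeff n (k + 1) * (k + 1) ^ 2 / ((n - k) * (n + k + 1)) := by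
      rw [eq_div_iff (by positivity), coeff_succ_right_mul]
      ring
    have hdiff := eq_div_of_mul_eq (mod_cast (coeff_pos (Nat.le_of_lt hk)).ne')
      ((mul_comm _ _).trans (ih (Nat.le_of_lt hk)))
    have hsplit : approx (n + 1) (k + 1) - approx n (k + 1) = approx (n + 1) k - approx n k +
        (-1) ^ k / (2 * (k + 1) ^ 3) * (1 / coeff (n + 1) (k + 1) - 1 / coeff n (k + 1)) := by
      simp only [approx_succ_right]
      field_simp
      ring
    rw [hsplit, hdiff, hright, hleft]
    push_cast
    field_simp
    ring

theorem sq_coeff_mul_approx_succ_right_sub (n k : ℕ) :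
    (coeff n (k + 1) : ℚ) ^ 2 * (approx n (k + 1) - approx n k) =
      coeff n (k + 1) * (-1) ^ k / (2 * (k + 1) ^ 3) := by
  obtain hk | hk := le_or_gt (k + 1) n
  · have hpos : (0 : ℚ) < coeff n (k + 1) := mod_cast coeff_pos hk
    rw [approx_succ_right]
    field_simp
    ring
  · simp [coeff_eq_zero hk]

theorem sq_coeff_mul_approx_succ_succ_sub (n k : ℕ) :
    (coeff (n + 1) (k + 1) : ℚ) ^ 2 * (approx (n + 1) (k + 1) - approx n k) =
      coeff (n + 1) (k + 1) * (-1) ^ k *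
        (1 / (2 * (k + 1) ^ 3) + (n + k + 2) / ((n + 1) ^ 2 * (k + 1) ^ 2)) := by
  obtain hk | hk := le_or_gt k n
  · have hpos : (0 : ℚ) < coeff n k := mod_cast coeff_pos hk
    have hleft := coeff_mul_approx_succ_left_sub hk
    have hdiag : (coeff (n + 1) (k + 1) : ℚ) =
        (n + k + 2) * (n + k + 1) * coeff n k / (k + 1) ^ 2 := by
      rw [eq_div_iff (by positivity)]
      have h₁ := coeff_succ_right_mul (n + 1) k
      have h₂ := coeff_succ_left_mul n k
      push_cast at h₁
      linear_combination h₁ + (n + k + 2 : ℚ) * h₂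
    rw [← sub_add_sub_cancel _ (approx (n + 1) k), mul_add, sq_coeff_mul_approx_succ_right_sub,
      eq_div_of_mul_eq hpos.ne' ((mul_comm _ _).trans hleft), hdiag]
    field_simp
    ring
  · simp [coeff_eq_zero (Nat.succ_lt_succ hk)]

theorem sq_coeff_mul_approx_succ_right_sub_succ_left (n k : ℕ) :
    (coeff n (k + 1) : ℚ) ^ 2 * (approx n (k + 1) - approx (n + 1) k) =
      coeff n (k + 1) * (-1) ^ k *
        (1 / (2 * (k + 1) ^ 3) - (n - k) / ((n + 1) ^ 2 * (k + 1) ^ 2)) := by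
  obtain hk | hk := le_or_gt (k + 1) n
  · have hpos : (0 : ℚ) < coeff n k := mod_cast coeff_pos (Nat.le_of_lt hk)
    have hleft := coeff_mul_approx_succ_left_sub (Nat.le_of_lt hk)
    have hright : (coeff n (k + 1) : ℚ) = (n - k) * (n + k + 1) * coeff n k / (k + 1) ^ 2 := by
      rw [eq_div_iff (by positivity), coeff_succ_right_mul]
    rw [← sub_sub_sub_cancel_right _ _ (approx n k), mul_sub, sq_coeff_mul_approx_succ_right_sub,
      eq_div_of_mul_eq hpos.ne' ((mul_comm _ _).trans hleft), hright]
    field_simp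
    ring
  · simp [coeff_eq_zero hk]

/-- Apéry's recurrence operator: `u` satisfies the recursion of the Apéry numbers, with index
shifted by one, when `recOp u` vanishes. -/
def recOp (u : ℕ → ℚ) (n : ℕ) : ℚ :=
  (n + 2) ^ 3 * u (n + 2) - (34 * (n + 1) ^ 3 + 51 * (n + 1) ^ 2 + 27 * (n + 1) + 5) * u (n + 1) +
    (n + 1) ^ 3 * u n

/-- Zagier's certificate for `denom`: a function whose differences in `k` are the images under
`recOp` of the summands of `denom`. -/
def certDenom (n k : ℕ) : ℚ :=
  4 * (2 * n + 3) * (k * (2 * k + 1) - (2 * n + 3) ^ 2) * coeff (n + 1) k ^ 2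

/-- The analogue of `certDenom` for the summands of `numer`. -/
def certNumer (n k : ℕ) : ℚ :=
  certDenom n k * approx (n + 1) k -
    5 * (2 * n + 3) * (-1) ^ k * k / ((n + 1) * (n + 2)) * coeff (n + 1) k

theorem recOp_sum {ι : Type*} (f : ℕ → ι → ℚ) (s : Finset ι) (n : ℕ) :
    recOp (fun m ↦ ∑ k ∈ s, f m k) n = ∑ k ∈ s, recOp (f · k) n := by
  simp only [recOp, sum_add_distrib, sum_sub_distrib, mul_sum]

theorem recOp_sum_range_eq_zero {f : ℕ → ℕ → ℚ} {g : ℕ → ℚ} {n : ℕ}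
    (hf : ∀ m k, m < k → f m k = 0) (hg : g (n + 2) = 0) (hzero : recOp (f · 0) n = g 0)
    (hsucc : ∀ k, recOp (f · (k + 1)) n = g (k + 1) - g k) :
    recOp (fun m ↦ ∑ k ∈ range (m + 1), f m k) n = 0 := by
  have hext {m : ℕ} (hm : m ≤ n + 2) :
      ∑ k ∈ range (m + 1), f m k = ∑ k ∈ range (n + 2 + 1), f m k :=
    sum_subset (range_mono (by lia)) fun k _ hk ↦ hf m k (by simpa using hk)
  calc recOp (fun m ↦ ∑ k ∈ range (m + 1), f m k) n
      = recOp (fun m ↦ ∑ k ∈ range (n + 2 + 1), f m k) n := by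
        simp only [recOp, hext (m := n + 1) (by lia), hext (m := n) (by lia)]
    _ = ∑ k ∈ range (n + 2), (g (k + 1) - g k) + g 0 := by
        rw [recOp_sum, sum_range_succ', hzero, sum_congr rfl fun k _ ↦ hsucc k]
    _ = 0 := by rw [sum_range_sub, hg]; ring

theorem recOp_sq_coeff (n k : ℕ) :
    recOp (fun m ↦ (coeff m (k + 1) : ℚ) ^ 2) n = certDenom n (k + 1) - certDenom n k := by
  obtain ⟨s, h₂, h₁, h₀, h⟩ := exists_coeff_eq n k
  simp only [recOp, certDenom, h₂, h₁, h₀, h]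
  push_cast
  ring

/- Measuring the three values of `approx` from `approx (n + 1) k` reduces the claim to
`recOp_sq_coeff` and the identity `hresidual`, in which `approx` no longer occurs. -/
theorem recOp_sq_coeff_mul_approx (n k : ℕ) :
    recOp (fun m ↦ (coeff m (k + 1) : ℚ) ^ 2 * approx m (k + 1)) n =
      certNumer n (k + 1) - certNumer n k := by
  have hcert := recOp_sq_coeff n k
  have happrox₂ := sq_coeff_mul_approx_succ_succ_sub (n + 1) k
  have happrox₁ := sq_coeff_mul_approx_succ_right_sub (n + 1) k
  have happrox₀ := sq_coeff_mul_approx_succ_right_sub_succ_left n k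
  obtain ⟨s, h₂, h₁, h₀, h⟩ := exists_coeff_eq n k
  simp only [recOp, certNumer, certDenom, add_assoc, Nat.reduceAdd, h₂, h₁, h₀, h]
    at hcert happrox₂ happrox₁ happrox₀ ⊢
  push_cast at hcert happrox₂ happrox₁ happrox₀ ⊢
  have hresidual : (n + 2) ^ 3 * (s * (n + k + 2) * (n + k + 3) * (-1) ^ k *
        (1 / (2 * (k + 1) ^ 3) + (n + k + 3) / ((n + 2) ^ 2 * (k + 1) ^ 2))) -
      (34 * (n + 1) ^ 3 + 51 * (n + 1) ^ 2 + 27 * (n + 1) + 5 +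
        4 * (2 * n + 3) * ((k + 1) * (2 * k + 3) - (2 * n + 3) ^ 2)) *
          (s * (n + k + 2) * (n + 1 - k) * (-1) ^ k / (2 * (k + 1) ^ 3)) +
      (n + 1) ^ 3 * (s * (n + 1 - k) * (n - k) * (-1) ^ k *
        (1 / (2 * (k + 1) ^ 3) - (n - k) / ((n + 1) ^ 2 * (k + 1) ^ 2))) =
      5 * (2 * n + 3) * (-1) ^ k / ((n + 1) * (n + 2)) *
        ((k + 1) * (s * (n + k + 2) * (n + 1 - k)) + k * (s * (k + 1) ^ 2)) := by
    field_simp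
    ring
  linear_combination approx (n + 1) k * hcert + (n + 2 : ℚ) ^ 3 * happrox₂ -
    (34 * (n + 1) ^ 3 + 51 * (n + 1) ^ 2 + 27 * (n + 1) + 5 +
        4 * (2 * n + 3) * ((k + 1) * (2 * k + 3) - (2 * n + 3) ^ 2) : ℚ) * happrox₁ +
    (n + 1 : ℚ) ^ 3 * happrox₀ + hresidual

theorem recOp_denom (n : ℕ) : recOp (fun m ↦ (denom m : ℚ)) n = 0 := by
  simp only [denom, Nat.cast_sum, Nat.cast_pow]
  refine recOp_sum_range_eq_zero (g := certDenom n) (fun m k h ↦ ?_) ?_ ?_ (recOp_sq_coeff n)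
  · simp [coeff_eq_zero h]
  · simp [certDenom, coeff_eq_zero (Nat.lt_succ_self (n + 1))]
  · simp only [recOp, certDenom, coeff_zero_right]
    push_cast
    ring

theorem recOp_numer (n : ℕ) : recOp numer n = 0 := by
  refine recOp_sum_range_eq_zero (g := certNumer n) (fun m k h ↦ ?_) ?_ ?_
    (recOp_sq_coeff_mul_approx n)
  · simp [coeff_eq_zero h]
  · simp [certNumer, certDenom, coeff_eq_zero (Nat.lt_succ_self (n + 1))]
  · simp only [recOp, certNumer, certDenom, coeff_zero_right, approx_zero_right, partialSum,
      sum_range_succ]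
    push_cast
    field_simp
    ring

theorem casoratian_mul_eq {u v : ℕ → ℚ} (hu : ∀ n, recOp u n = 0) (hv : ∀ n, recOp v n = 0)
    (n : ℕ) : (v (n + 1) * u n - u (n + 1) * v n) * (n + 1) ^ 3 = v 1 * u 0 - u 1 * v 0 := by
  induction n with
  | zero => simp
  | succ n ih =>
    have hun := hu n
    have hvn := hv n
    simp only [recOp] at hun hvn
    push_cast
    linear_combination ih + u (n + 1) * hvn - v (n + 1) * hun

theorem numer_succ_mul_sub (n : ℕ) :
    numer (n + 1) * denom n - denom (n + 1) * numer n = 6 / (n + 1) ^ 3 := by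
  rw [eq_div_iff (by positivity), casoratian_mul_eq recOp_denom recOp_numer]
  norm_num [numer, denom, approx, partialSum, coeff, sum_range_succ]

/-! ### Growth and convergence -/

theorem coeff_le_coeff_succ_left (n k : ℕ) : coeff n k ≤ coeff (n + 1) k :=
  Nat.mul_le_mul (Nat.choose_le_choose k (by lia)) (Nat.choose_le_choose k (by lia))

theorem denom_mono : Monotone denom := monotone_nat_of_le_succ fun n ↦
  (sum_le_sum fun k _ ↦ Nat.pow_le_pow_left (coeff_le_coeff_succ_left n k) 2).trans
    (sum_le_sum_of_subset (range_mono (Nat.le_succ _)))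

theorem denom_pos (n : ℕ) : 0 < denom n :=
  sum_pos (fun _ hk ↦ pow_pos (coeff_pos (mem_range_succ_iff.1 hk)) 2) nonempty_range_add_one

theorem denom_rec (n : ℕ) :
    (n + 2) ^ 3 * denom (n + 2) + (n + 1) ^ 3 * denom n =
      (34 * (n + 1) ^ 3 + 51 * (n + 1) ^ 2 + 27 * (n + 1) + 5) * denom (n + 1) := by
  have h := recOp_denom n
  rw [recOp, sub_add_eq_add_sub, sub_eq_zero] at h
  exact mod_cast h

theorem eventually_mul_denom_le {r s : ℝ} (hr : 0 < r) (hs : s < 34 - 1 / r)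
    (h : ∀ᶠ n in atTop, r * denom n ≤ denom (n + 1)) :
    ∀ᶠ n in atTop, s * denom n ≤ denom (n + 1) := by
  rw [← map_add_atTop_eq_nat 1, eventually_map]
  -- For `s < 34` the terms of degree at most two in `hpoly` cost at most `155 * (n + 1) ^ 2`.
  have hlarge : ∀ᶠ n : ℕ in atTop, 155 / (34 - 1 / r - s) ≤ n :=
    tendsto_natCast_atTop_atTop.eventually_ge_atTop _
  filter_upwards [h, hlarge] with n hn hlarge
  rw [div_le_iff₀ (by linarith)] at hlarge
  have hrec : ((n : ℝ) + 2) ^ 3 * denom (n + 2) + (n + 1) ^ 3 * denom n =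
      (34 * (n + 1) ^ 3 + 51 * (n + 1) ^ 2 + 27 * (n + 1) + 5) * denom (n + 1) :=
    mod_cast denom_rec n
  have hprev : (denom n : ℝ) ≤ denom (n + 1) / r := by rwa [le_div_iff₀' hr]
  have hr' : 0 < 1 / r := by positivity
  have hpoly : s * (n + 2) ^ 3 ≤
      34 * (n + 1) ^ 3 + 51 * (n + 1) ^ 2 + 27 * (n + 1) + 5 - (n + 1) ^ 3 * (1 / r) := by
    have hcube := mul_nonneg (sq_nonneg ((n : ℝ) + 1)) (sub_nonneg.2 hlarge)
    nlinarith [(n.cast_nonneg : (0 : ℝ) ≤ n)]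
  refine le_of_mul_le_mul_left (a := ((n : ℝ) + 2) ^ 3) ?_ (by positivity)
  calc ((n : ℝ) + 2) ^ 3 * (s * denom (n + 1)) = s * (n + 2) ^ 3 * denom (n + 1) := by ring
    _ ≤ (34 * (n + 1) ^ 3 + 51 * (n + 1) ^ 2 + 27 * (n + 1) + 5 - (n + 1) ^ 3 * (1 / r)) *
          denom (n + 1) := by gcongr
    _ = (n + 2) ^ 3 * denom (n + 2) + (n + 1) ^ 3 * (denom n - denom (n + 1) / r) := by
        linear_combination -hrec
    _ ≤ (n + 2) ^ 3 * denom (n + 2) := by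
        have : (n + 1 : ℝ) ^ 3 * (denom n - denom (n + 1) / r) ≤ 0 :=
          mul_nonpos_of_nonneg_of_nonpos (by positivity) (sub_nonpos.2 hprev)
        linarith

theorem isBigO_pow_denom : (fun n ↦ (33 : ℝ) ^ n) =O[atTop] fun n ↦ (denom n : ℝ) := by
  have hratio₁ : ∀ᶠ n in atTop, (1 : ℝ) * denom n ≤ denom (n + 1) := .of_forall fun n ↦ by
    rw [one_mul]
    exact mod_cast denom_mono (Nat.le_succ n)
  have hratio₃₂ : ∀ᶠ n in atTop, (32 : ℝ) * denom n ≤ denom (n + 1) :=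
    eventually_mul_denom_le one_pos (by norm_num) hratio₁
  exact isBigO_pow_of_eventually_mul_le (by norm_num) (fun n ↦ mod_cast denom_pos n)
    (eventually_mul_denom_le (by norm_num) (by norm_num) hratio₃₂)

theorem tendsto_lcmUpto_pow_div_denom :
    Tendsto (fun n ↦ (n.lcmUpto : ℝ) ^ 3 / denom n) atTop (𝓝 0) := by
  have hlcm : (fun n ↦ (n.lcmUpto : ℝ) ^ 3) =O[atTop] fun n ↦ ((16 / 5 : ℝ) ^ 3) ^ n := by
    simpa only [← pow_mul, mul_comm 3] using isBigO_lcmUpto_pow.pow 3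
  have hpow : (fun n ↦ ((16 / 5 : ℝ) ^ 3) ^ n) =o[atTop] fun n ↦ (33 : ℝ) ^ n :=
    isLittleO_pow_pow_of_lt_left (by norm_num) (by norm_num)
  exact ((hlcm.trans_isLittleO hpow).trans_isBigO isBigO_pow_denom).tendsto_div_nhds_zero

/-- The value `ζ(3)`, as the sum of its defining series. -/
noncomputable def zetaThree : ℝ := ∑' m : ℕ, 1 / ((m : ℝ) + 1) ^ 3

theorem tendsto_partialSum : Tendsto (fun n ↦ (partialSum n : ℝ)) atTop (𝓝 zetaThree) := by
  have hsum : Summable fun m : ℕ ↦ 1 / ((m : ℝ) + 1) ^ 3 := by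
    simpa using (summable_nat_add_iff 1).2 (Real.summable_one_div_nat_pow.2 (by simp : 1 < 3))
  simpa [partialSum, zetaThree] using hsum.hasSum.tendsto_sum_nat

theorem succ_le_coeff {n k : ℕ} (hk : k ≠ 0) (hkn : k ≤ n) : n + 1 ≤ coeff n k := by
  calc n + 1 = (n + 1).choose n := (Nat.choose_succ_self_right n).symm
    _ ≤ (n + k).choose n := Nat.choose_le_choose n (by lia)
    _ = 1 * (n + k).choose k := by rw [Nat.choose_symm_add, one_mul]
    _ ≤ coeff n k := Nat.mul_le_mul_right _ (Nat.choose_pos hkn)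

theorem abs_approx_sub_partialSum_le {n k : ℕ} (hk : k ≤ n) :
    |approx n k - partialSum n| ≤ partialSum n / (n + 1) := by
  rw [approx, add_sub_cancel_left]
  calc |∑ m ∈ range k, (-1) ^ m / (2 * ((m : ℚ) + 1) ^ 3 * coeff n (m + 1))|
      ≤ ∑ m ∈ range k, |(-1) ^ m / (2 * ((m : ℚ) + 1) ^ 3 * coeff n (m + 1))| :=
        abs_sum_le_sum_abs _ _
    _ ≤ ∑ m ∈ range k, 1 / ((m : ℚ) + 1) ^ 3 / (n + 1) := sum_le_sum fun m hm ↦ by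
        have hcoeff : (n + 1 : ℚ) ≤ coeff n (m + 1) :=
          mod_cast succ_le_coeff m.succ_ne_zero ((mem_range.1 hm).trans_le hk)
        have hcoeff_pos : (0 : ℚ) < coeff n (m + 1) := hcoeff.trans_lt' (by positivity)
        rw [abs_div, abs_neg_one_pow, abs_of_pos (by positivity), div_div]
        gcongr
        exact le_mul_of_one_le_left (by positivity) one_le_two
    _ ≤ ∑ m ∈ range n, 1 / ((m : ℚ) + 1) ^ 3 / (n + 1) :=
        sum_le_sum_of_subset_of_nonneg (range_mono hk) fun _ _ _ ↦ by positivity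
    _ = partialSum n / (n + 1) := by rw [partialSum, sum_div]

theorem abs_numer_div_denom_sub_partialSum_le (n : ℕ) :
    |numer n / denom n - partialSum n| ≤ partialSum n / (n + 1) := by
  have hpos : (0 : ℚ) < denom n := mod_cast denom_pos n
  have hcenter : numer n - partialSum n * denom n =
      ∑ k ∈ range (n + 1), (coeff n k : ℚ) ^ 2 * (approx n k - partialSum n) := by
    simp only [mul_sub, sum_sub_distrib, ← sum_mul, numer, denom]
    push_cast
    ring
  rw [div_sub' hpos.ne', mul_comm, hcenter, abs_div, abs_of_pos hpos, div_le_iff₀ hpos]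
  calc |∑ k ∈ range (n + 1), (coeff n k : ℚ) ^ 2 * (approx n k - partialSum n)|
      ≤ ∑ k ∈ range (n + 1), |(coeff n k : ℚ) ^ 2 * (approx n k - partialSum n)| :=
        abs_sum_le_sum_abs _ _
    _ ≤ ∑ k ∈ range (n + 1), partialSum n / (n + 1) * (coeff n k : ℚ) ^ 2 :=
        sum_le_sum fun k hk ↦ by
          rw [abs_mul, abs_of_nonneg (sq_nonneg _), mul_comm]
          gcongr
          exact abs_approx_sub_partialSum_le (mem_range_succ_iff.1 hk)
    _ = partialSum n / (n + 1) * denom n := by rw [← mul_sum, denom]; push_cast; rfl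

theorem tendsto_numer_div_denom :
    Tendsto (fun n ↦ (numer n / denom n : ℝ)) atTop (𝓝 zetaThree) := by
  have hbound : Tendsto (fun n : ℕ ↦ (partialSum n / (n + 1) : ℝ)) atTop (𝓝 0) := by
    simpa [div_eq_mul_inv] using
      tendsto_partialSum.mul (tendsto_one_div_add_atTop_nhds_zero_nat (𝕜 := ℝ))
  have hdiff : Tendsto (fun n ↦ (numer n / denom n - partialSum n : ℝ)) atTop (𝓝 0) :=
    squeeze_zero_norm (fun n ↦ by
      rw [Real.norm_eq_abs]
      exact mod_cast abs_numer_div_denom_sub_partialSum_le n) hbound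
  simpa using hdiff.add tendsto_partialSum

theorem numer_div_denom_succ_sub (n : ℕ) :
    (numer (n + 1) / denom (n + 1) - numer n / denom n : ℝ) =
      6 / (n + 1) ^ 3 / (denom n * denom (n + 1)) := by
  have hpos : (0 : ℝ) < denom n := mod_cast denom_pos n
  have hpos' : (0 : ℝ) < denom (n + 1) := mod_cast denom_pos (n + 1)
  have hcast : (numer (n + 1) * denom n - denom (n + 1) * numer n : ℝ) = 6 / (n + 1) ^ 3 := by
    have h := congrArg (Rat.cast : ℚ → ℝ) (numer_succ_mul_sub n)
    push_cast at h
    exact h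
  rw [div_sub_div _ _ hpos'.ne' hpos.ne', hcast, mul_comm (denom n : ℝ)]

theorem numer_lt_denom_mul_zetaThree (n : ℕ) : (numer n : ℝ) < denom n * zetaThree := by
  have hpos (m : ℕ) : (0 : ℝ) < denom m := mod_cast denom_pos m
  have hmono : StrictMono fun n ↦ (numer n / denom n : ℝ) := strictMono_nat_of_lt_succ fun m ↦ by
    have := hpos m
    have := hpos (m + 1)
    rw [← sub_pos, numer_div_denom_succ_sub]
    positivity
  rw [← div_lt_iff₀' (hpos n)]
  exact (hmono n.lt_succ_self).trans_le (hmono.monotone.ge_of_tendsto tendsto_numer_div_denom _)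

theorem numer_div_denom_sub_le {m n : ℕ} (h : n ≤ m) :
    (numer m / denom m - numer n / denom n : ℝ) ≤
      6 * (partialSum m - partialSum n) / denom n ^ 2 := by
  induction m, h using Nat.le_induction with
  | base => simp
  | succ m hnm ih =>
    have hpos : (0 : ℝ) < denom n := mod_cast denom_pos n
    have hdenom : (denom n ^ 2 : ℝ) ≤ denom m * denom (m + 1) := by
      rw [sq]
      exact mod_cast Nat.mul_le_mul (denom_mono hnm) (denom_mono (hnm.trans m.le_succ))
    have hsum : (partialSum (m + 1) : ℝ) = partialSum m + 1 / (m + 1) ^ 3 := by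
      simp [partialSum, sum_range_succ]
    calc (numer (m + 1) / denom (m + 1) - numer n / denom n : ℝ)
        = 6 / (m + 1) ^ 3 / (denom m * denom (m + 1)) +
            (numer m / denom m - numer n / denom n) := by
          rw [← numer_div_denom_succ_sub, sub_add_sub_cancel]
      _ ≤ 6 / (m + 1) ^ 3 / denom n ^ 2 + 6 * (partialSum m - partialSum n) / denom n ^ 2 := by
          gcongr
      _ = 6 * (partialSum (m + 1) - partialSum n) / denom n ^ 2 := by rw [hsum]; ring

theorem denom_mul_zetaThree_sub_numer_le (n : ℕ) :
    denom n * zetaThree - numer n ≤ 6 * zetaThree / denom n := by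
  have hpos : (0 : ℝ) < denom n := mod_cast denom_pos n
  have hsum_nonneg : (0 : ℝ) ≤ partialSum n := by
    rw [partialSum]
    positivity
  have hlim : zetaThree - numer n / denom n ≤ 6 * (zetaThree - partialSum n) / denom n ^ 2 :=
    le_of_tendsto_of_tendsto (tendsto_numer_div_denom.sub_const _)
      (((tendsto_partialSum.sub_const _).const_mul 6).div_const _)
      ((eventually_ge_atTop n).mono fun _ ↦ numer_div_denom_sub_le)
  calc denom n * zetaThree - numer n = denom n * (zetaThree - numer n / denom n) := by field_simp
    _ ≤ denom n * (6 * (zetaThree - partialSum n) / denom n ^ 2) := by gcongr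
    _ = 6 * (zetaThree - partialSum n) / denom n := by field_simp
    _ ≤ 6 * zetaThree / denom n := by gcongr; exact sub_le_self _ hsum_nonneg

/-! ### Integral linear forms -/

theorem pow_mul_coeff_dvd {n k m : ℕ} (hm : m ≠ 0) (hmk : m ≤ k) (hkn : k ≤ n) :
    m ^ 3 * coeff n m ∣ n.lcmUpto ^ 3 * (n + k).choose k := by
  have hcancel : (n + k).choose (n + m) * (n + m).choose m = (n + k).choose k * k.choose m := by
    have := Nat.choose_mul (n := n + k) (k := n + m) (s := n) (by lia)
    rwa [Nat.add_sub_cancel_left, Nat.add_sub_cancel_left, Nat.choose_symm_add,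
      Nat.choose_symm_add] at this
  refine Nat.dvd_of_mul_dvd_mul_right (Nat.choose_pos hmk) ?_
  calc m ^ 3 * coeff n m * k.choose m
      = m * (m * n.choose m) * (m * k.choose m) * (n + m).choose m := by rw [coeff]; ring
    _ ∣ n.lcmUpto * n.lcmUpto * n.lcmUpto * ((n + k).choose (n + m) * (n + m).choose m) := by
        gcongr
        · exact dvd_lcmUpto_s17 hm (hmk.trans hkn)
        · exact mul_choose_dvd_lcmUpto_s17 hm (hmk.trans hkn)
        · exact (mul_choose_dvd_lcmUpto_s17 hm hmk).trans (lcmUpto_dvd_lcmUpto_s17 hkn)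
        · exact dvd_mul_left _ _
    _ = n.lcmUpto ^ 3 * (n + k).choose k * k.choose m := by rw [hcancel]; ring

theorem natCast_div_mem_range_intCast {K : Type*} [DivisionRing K] [CharZero K] {a b : ℕ}
    (h : b ∣ a) : (a / b : K) ∈ (Int.castRingHom K).range := by
  rw [← Nat.cast_div_charZero h]
  exact natCast_mem _ _

theorem two_mul_lcmUpto_pow_mul_numer_mem (n : ℕ) :
    2 * (n.lcmUpto : ℚ) ^ 3 * numer n ∈ (Int.castRingHom ℚ).range := by
  rw [numer, mul_sum]
  refine sum_mem fun k hk ↦ ?_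
  have hkn : k ≤ n := mem_range_succ_iff.1 hk
  have hsplit : 2 * (n.lcmUpto : ℚ) ^ 3 * (coeff n k ^ 2 * approx n k) =
      2 * coeff n k ^ 2 * ∑ m ∈ range n, ((n.lcmUpto ^ 3 : ℕ) / ((m + 1) ^ 3 : ℕ) : ℚ) +
      n.choose k * coeff n k * ∑ m ∈ range k, (-1) ^ m *
        ((n.lcmUpto ^ 3 * (n + k).choose k : ℕ) / ((m + 1) ^ 3 * coeff n (m + 1) : ℕ) : ℚ) := by
    rw [approx, partialSum, mul_add, mul_add, mul_sum, mul_sum, mul_sum, mul_sum, mul_sum, mul_sum]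
    congr 1 <;> refine sum_congr rfl fun m _ ↦ ?_
    · push_cast
      ring
    · simp only [coeff]
      push_cast
      field_simp
  rw [hsplit]
  refine add_mem
    (mul_mem (mul_mem (natCast_mem _ 2) (pow_mem (natCast_mem _ _) 2))
      (sum_mem fun m hm ↦ natCast_div_mem_range_intCast ?_))
    (mul_mem (mul_mem (natCast_mem _ _) (natCast_mem _ _))
      (sum_mem fun m hm ↦ mul_mem (pow_mem (neg_mem (one_mem _)) m)
        (natCast_div_mem_range_intCast ?_)))
  · exact pow_dvd_pow_of_dvd (dvd_lcmUpto_s17 m.succ_ne_zero (mem_range.1 hm)) 3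
  · exact pow_mul_coeff_dvd m.succ_ne_zero (mem_range.1 hm) hkn

/-- The linear form `2 d_n³ (A_n ζ(3) - B_n)` in `1` and `ζ(3)`, where `d_n = lcm (1, …, n)`; the
factor `2 d_n³` makes its coefficients integral. -/
noncomputable def linearForm (n : ℕ) : ℝ :=
  2 * (n.lcmUpto : ℝ) ^ 3 * (denom n * zetaThree - numer n)

theorem exists_int_mul_zetaThree_sub_eq_linearForm (n : ℕ) :
    ∃ a b : ℤ, a * zetaThree - b = linearForm n := by
  obtain ⟨b, hb⟩ := two_mul_lcmUpto_pow_mul_numer_mem n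
  have hb : (b : ℝ) = 2 * (n.lcmUpto : ℝ) ^ 3 * numer n := mod_cast hb
  refine ⟨(2 * n.lcmUpto ^ 3 * denom n : ℕ), b, ?_⟩
  rw [linearForm, hb]
  push_cast
  ring

theorem linearForm_pos (n : ℕ) : 0 < linearForm n := by
  have hlcm := n.lcmUpto_ne_zero
  exact mul_pos (by positivity) (sub_pos.2 (numer_lt_denom_mul_zetaThree n))

theorem tendsto_linearForm : Tendsto linearForm atTop (𝓝 0) := by
  have hlim := tendsto_lcmUpto_pow_div_denom.const_mul (12 * zetaThree)
  rw [mul_zero] at hlim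
  refine squeeze_zero (fun n ↦ (linearForm_pos n).le) (fun n ↦ ?_) hlim
  calc linearForm n ≤ 2 * (n.lcmUpto : ℝ) ^ 3 * (6 * zetaThree / denom n) := by
        rw [linearForm]
        gcongr
        exact denom_mul_zetaThree_sub_numer_le n
    _ = 12 * zetaThree * ((n.lcmUpto : ℝ) ^ 3 / denom n) := by ring

end Apery

/-- **Apéry's theorem**: the real number `ζ(3) = ∑_{m=1}^∞ 1/m³` is irrational. -/
theorem zeta3_irrational : Irrational (∑' m : ℕ, 1 / ((m : ℝ) + 1) ^ 3) := by
  choose a b hab using Apery.exists_int_mul_zetaThree_sub_eq_linearForm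
  refine irrational_of_tendsto_zero (a := a) (b := b) (l := atTop) (fun n ↦ ?_) ?_
  · exact sub_ne_zero.1 ((hab n).trans_ne (Apery.linearForm_pos n).ne')
  · exact Apery.tendsto_linearForm.congr fun n ↦ (hab n).symm
end

section
/- Let a, b, c, d be complex numbers with ad − bc = 1, let F : ℂ → ℂ be an entire function, and set w(u) = (a·u + b)/(c·u + d). Then for every integer n ≥ 1 and every z ∈ ℂ with c·z + d ≠ 0, the n-th derivative of F evaluated at w(z) equals (c·z + d)^{n+1} times the n-th derivative at z of the function u ↦ (c·u + d)^{n−1} · F(w(u)); that is, F^{(n)}(w(z)) = (cz+d)^{n+1} · (d/dz)^n [ (cz+d)^{n−1} F(w(z)) ]. -/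
/-!
Write `j = cz + d`, `w = (az + b) / j`, `δ = ad - bc` and `D = d/dz`. Leibniz' rule for the degree
one factor `j`, namely `Dⁿ⁺¹ j = j Dⁿ⁺¹ + (n + 1) c Dⁿ`, amounts to the operator identity
`D jⁿ⁺¹ Dⁿ = jⁿ Dⁿ⁺¹ j`. Hence applying `D` to `δⁿ F⁽ⁿ⁾ ∘ w = jⁿ⁺¹ Dⁿ (jⁿ⁻¹ F ∘ w)` and using
`D w = δ / j²` on the left gives `δⁿ⁺¹ j⁻² F⁽ⁿ⁺¹⁾ ∘ w = jⁿ Dⁿ⁺¹ (jⁿ F ∘ w)`, which is the same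
identity for `n + 1`.
-/

open scoped Topology

variable {𝕜 E : Type*} [NontriviallyNormedField 𝕜] [NormedAddCommGroup E] [NormedSpace 𝕜 E]

lemma hasDerivAt_iteratedDeriv {f : 𝕜 → E} {x : 𝕜} {n : ℕ} (hf : ContDiffAt 𝕜 (n + 1) f x) :
    HasDerivAt (iteratedDeriv n f) (iteratedDeriv (n + 1) f x) x := by
  have hn : (n : WithTop ℕ∞) < n + 1 := by exact_mod_cast n.lt_succ_self
  have hdiff : DifferentiableAt 𝕜 (iteratedDeriv n f) x := by
    simpa only [iteratedDerivWithin_univ, differentiableWithinAt_univ] using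
      hf.contDiffWithinAt.differentiableWithinAt_iteratedDerivWithin (s := Set.univ) hn
        (by simp [uniqueDiffOn_univ])
  simpa only [iteratedDeriv_succ] using hdiff.hasDerivAt

lemma iteratedDeriv_smul {𝔸 : Type*} [NormedRing 𝔸] [NormedAlgebra 𝕜 𝔸] [Module 𝔸 E]
    [IsBoundedSMul 𝔸 E] [IsScalarTower 𝕜 𝔸 E] {f : 𝕜 → 𝔸} {g : 𝕜 → E} {x : 𝕜} {n : ℕ}
    (hf : ContDiffAt 𝕜 n f x) (hg : ContDiffAt 𝕜 n g x) :
    iteratedDeriv n (f • g) x =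
      ∑ i ∈ Finset.range (n + 1),
        n.choose i • iteratedDeriv i f x • iteratedDeriv (n - i) g x := by
  simpa only [iteratedDerivWithin_univ] using
    iteratedDerivWithin_smul (Set.mem_univ x) uniqueDiffOn_univ
      hf.contDiffWithinAt hg.contDiffWithinAt

section Affine

variable (c d z : 𝕜)

lemma hasDerivAt_affine : HasDerivAt (fun u => c * u + d) c z :=
  (hasDerivAt_const_mul c).add_const d

lemma iteratedDeriv_add_two_affine (n : ℕ) :
    iteratedDeriv (n + 2) (fun u => c * u + d) z = 0 := by
  have hderiv : deriv (fun u => c * u + d) = fun _ => c :=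
    funext fun u => (hasDerivAt_affine c d u).deriv
  simp [iteratedDeriv_succ', hderiv]

variable {z}

lemma iteratedDeriv_succ_affine_smul {g : 𝕜 → E} {n : ℕ} (hg : ContDiffAt 𝕜 (n + 1) g z) :
    iteratedDeriv (n + 1) (fun u => (c * u + d) • g u) z =
      (c * z + d) • iteratedDeriv (n + 1) g z + ((n + 1) * c) • iteratedDeriv n g z := by
  have hj : ContDiffAt 𝕜 (n + 1 : ℕ) (fun u => c * u + d) z := by fun_prop
  have leibniz := iteratedDeriv_smul hj (by exact_mod_cast hg)
  simp only [Finset.sum_range_succ', iteratedDeriv_add_two_affine, zero_smul, smul_zero,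
    Finset.sum_const_zero] at leibniz
  refine leibniz.trans ?_
  simp [mul_smul, add_comm, ← Nat.cast_smul_eq_nsmul 𝕜]

lemma hasDerivAt_affine_pow_smul_iteratedDeriv {g : 𝕜 → E} {n : ℕ}
    (hg : ContDiffAt 𝕜 (n + 1) g z) :
    HasDerivAt (fun u => (c * u + d) ^ (n + 1) • iteratedDeriv n g u)
      ((c * z + d) ^ n • iteratedDeriv (n + 1) (fun u => (c * u + d) • g u) z) z := by
  have hpow : HasDerivAt (fun u => (c * u + d) ^ (n + 1)) ((n + 1) * (c * z + d) ^ n * c) z := by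
    simpa using (hasDerivAt_affine c d z).fun_pow (n + 1)
  refine (hpow.fun_smul (hasDerivAt_iteratedDeriv hg)).congr_deriv ?_
  rw [iteratedDeriv_succ_affine_smul c d hg]
  module

end Affine

section Mobius

variable {a b c d z : 𝕜} {F : 𝕜 → E}

lemma hasDerivAt_mobius (hz : c * z + d ≠ 0) :
    HasDerivAt (fun u => (a * u + b) / (c * u + d)) ((a * d - b * c) / (c * z + d) ^ 2) z :=
  ((hasDerivAt_affine a b z).div (hasDerivAt_affine c d z) hz).congr_deriv (by ring)

lemma contDiffAt_mobius {m : WithTop ℕ∞} (hz : c * z + d ≠ 0) :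
    ContDiffAt 𝕜 m (fun u => (a * u + b) / (c * u + d)) z := by
  fun_prop (disch := assumption)

lemma contDiffAt_pow_smul_comp_mobius {m : WithTop ℕ∞} (n : ℕ) (hz : c * z + d ≠ 0)
    (hF : ContDiffAt 𝕜 m F ((a * z + b) / (c * z + d))) :
    ContDiffAt 𝕜 m (fun u => (c * u + d) ^ n • F ((a * u + b) / (c * u + d))) z := by
  have hj : ContDiffAt 𝕜 m (fun u => (c * u + d) ^ n) z := by fun_prop
  exact hj.smul (hF.comp z (contDiffAt_mobius hz))

lemma hasDerivAt_iteratedDeriv_comp_mobius {n : ℕ} (hz : c * z + d ≠ 0)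
    (hF : ContDiffAt 𝕜 (n + 1) F ((a * z + b) / (c * z + d))) :
    HasDerivAt (fun u => iteratedDeriv n F ((a * u + b) / (c * u + d)))
      (((a * d - b * c) / (c * z + d) ^ 2) •
        iteratedDeriv (n + 1) F ((a * z + b) / (c * z + d))) z :=
  HasDerivAt.scomp z (hasDerivAt_iteratedDeriv hF) (hasDerivAt_mobius hz)

end Mobius

theorem mobius_iterated_deriv_general (a b c d : 𝕜) (F : 𝕜 → E) (n : ℕ) (z : 𝕜)
    (hz : c * z + d ≠ 0) (hF : ContDiffAt 𝕜 (n + 1) F ((a * z + b) / (c * z + d))) :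
    (a * d - b * c) ^ (n + 1) • iteratedDeriv (n + 1) F ((a * z + b) / (c * z + d)) =
      (c * z + d) ^ (n + 2) •
        iteratedDeriv (n + 1)
          (fun u => (c * u + d) ^ n • F ((a * u + b) / (c * u + d))) z := by
  induction n generalizing z with
  | zero =>
    have chain_rule := (hasDerivAt_iteratedDeriv_comp_mobius (n := 0) hz hF).deriv
    simp only [iteratedDeriv_zero, zero_add] at chain_rule
    simp [chain_rule, smul_smul, mul_div_cancel₀, hz]
  | succ n ih =>
    set w : 𝕜 → 𝕜 := fun u => (a * u + b) / (c * u + d)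
    set G : 𝕜 → E := fun u => (c * u + d) ^ n • F (w u)
    have hjG : (fun u => (c * u + d) ^ (n + 1) • F (w u)) = fun u => (c * u + d) • G u := by
      simp only [G, smul_smul, pow_succ']
    have ih_near : (fun u => (a * d - b * c) ^ (n + 1) • iteratedDeriv (n + 1) F (w u)) =ᶠ[𝓝 z]
        fun u => (c * u + d) ^ (n + 2) • iteratedDeriv (n + 1) G u := by
      filter_upwards [(hasDerivAt_affine c d z).continuousAt.eventually_ne hz,
        (hasDerivAt_mobius hz).continuousAt.eventually
          ((hF.of_le le_self_add).eventually (by simp))] with u hu hFu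
      exact ih u hu (by exact_mod_cast hFu)
    have ih_deriv :
        (a * d - b * c) ^ (n + 1) • ((a * d - b * c) / (c * z + d) ^ 2) •
            iteratedDeriv (n + 2) F (w z) =
          (c * z + d) ^ (n + 1) • iteratedDeriv (n + 2) (fun u => (c * u + d) • G u) z :=
      ((hasDerivAt_iteratedDeriv_comp_mobius hz hF).const_smul _).unique <|
        (hasDerivAt_affine_pow_smul_iteratedDeriv c d
          (contDiffAt_pow_smul_comp_mobius n hz hF)).congr_of_eventuallyEq ih_near
    calc (a * d - b * c) ^ (n + 2) • iteratedDeriv (n + 2) F (w z)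
        = (c * z + d) ^ 2 • (a * d - b * c) ^ (n + 1) •
            ((a * d - b * c) / (c * z + d) ^ 2) • iteratedDeriv (n + 2) F (w z) := by
          match_scalars
          field_simp
          ring
      _ = (c * z + d) ^ (n + 3) •
            iteratedDeriv (n + 2) (fun u => (c * u + d) ^ (n + 1) • F (w u)) z := by
          rw [ih_deriv, hjG, smul_smul, ← pow_add, add_comm 2]

/-- The operator identity `(d/dw)ⁿ = (cz+d)^{n+1} (d/dz)ⁿ (cz+d)^{n-1}` for the Möbius
coordinate change `w = (az+b)/(cz+d)` with `ad - bc = 1`: for an entire function `F`,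
every `n ≥ 1` and every `z` with `cz + d ≠ 0`,
`F⁽ⁿ⁾(w(z)) = (cz+d)^{n+1} · (d/dz)ⁿ [ (cz+d)^{n-1} F(w(z)) ]`. -/
theorem mobius_iterated_deriv (a b c d : ℂ) (h : a * d - b * c = 1)
    (F : ℂ → ℂ) (hF : Differentiable ℂ F) (n : ℕ) (hn : 1 ≤ n)
    (z : ℂ) (hz : c * z + d ≠ 0) :
    iteratedDeriv n F ((a * z + b) / (c * z + d))
      = (c * z + d) ^ (n + 1) *
          iteratedDeriv n
            (fun u => (c * u + d) ^ (n - 1) * F ((a * u + b) / (c * u + d))) z := by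
  obtain ⟨k, rfl⟩ := Nat.exists_eq_add_of_le' hn
  simpa [h] using mobius_iterated_deriv_general a b c d F k z hz hF.contDiff.contDiffAt
end
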